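/- Let α be a pre-homogeneous dimension vector of Q and let σ be either the weight ⟨α,·⟩ or the weight −⟨·,α⟩. If δ is a dimension vector that admits a σ-stable representation, then δ is a real Schur root of Q. -/

import Mathlib

set_option autoImplicit false

noncomputable section

open scoped BigOperators

/-! Basic setup for representations of a quiver with vertex set `V`, arrow set `A`,
tail map `t` and head map `h`, over a field `K`. -/

variable (K : Type) [Field K]
variable {V A : Type} [Fintype V] [DecidableEq V] [Fintype A]

/-- The Euler form of the quiver `(V, A, t, h)`. -/
def eulerForm {R : Type} [CommRing R] (t h : A → V) (x y : V → R) : R :=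
  ∑ i, x i * y i - ∑ a, x (t a) * y (h a)

def natZ (x : V → ℕ) : V → ℤ := fun i => (x i : ℤ)
def intQ (x : V → ℤ) : V → ℚ := fun i => (x i : ℚ)
def natQ (x : V → ℕ) : V → ℚ := fun i => (x i : ℚ)

/-- The weight `⟨α,·⟩`. -/
def weightL (t h : A → V) (α : V → ℤ) : V → ℤ :=
  fun i => eulerForm t h α (fun j => if j = i then 1 else 0)

/-- The weight `−⟨·,α⟩`. -/
def weightR (t h : A → V) (α : V → ℤ) : V → ℤ :=
  fun i => - eulerForm t h (fun j => if j = i then 1 else 0) α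

/-- `IsPathFrom t h i p j` : the list of arrows `p` is a path from `i` to `j`. -/
def IsPathFrom (t h : A → V) : V → List A → V → Prop
  | i, [], j => i = j
  | i, a :: p, j => t a = i ∧ IsPathFrom t h (h a) p j

/-- The quiver has no (nontrivial) oriented cycles. -/
def Acyclic (t h : A → V) : Prop := ∀ (i : V) (p : List A), IsPathFrom t h i p i → p = []

/-- The dimension vector `γ_i` of the projective indecomposable at `i`:
`γ_i(j)` is the number of paths from `i` to `j`. -/
def gammaRoot (t h : A → V) (i : V) : V → ℕ :=
  fun j => Set.ncard {p : List A | IsPathFrom t h i p j}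

/-- A finite-dimensional representation of the quiver `(V, A, t, h)` over `K`. -/
structure QuivRep (K : Type) [Field K] (V A : Type) (t h : A → V) : Type 1 where
  sp : V → Type
  [inst1 : ∀ i, AddCommGroup (sp i)]
  [inst2 : ∀ i, Module K (sp i)]
  [inst3 : ∀ i, FiniteDimensional K (sp i)]
  map : ∀ a : A, sp (t a) →ₗ[K] sp (h a)

attribute [instance] QuivRep.inst1 QuivRep.inst2 QuivRep.inst3

namespace QuivRep

variable {K} {t h : A → V}

/-- The dimension vector of a representation. -/
def dimVec (X : QuivRep K V A t h) : V → ℕ := fun i => Module.finrank K (X.sp i)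

/-- A subrepresentation. -/
structure Sub (X : QuivRep K V A t h) where
  sub : ∀ i, Submodule K (X.sp i)
  le : ∀ a : A, ∀ x ∈ sub (t a), X.map a x ∈ sub (h a)

/-- The dimension vector of a subrepresentation. -/
def Sub.dimVec {X : QuivRep K V A t h} (U : Sub X) : V → ℕ :=
  fun i => Module.finrank K (U.sub i)

/-- The space `Hom_Q(X,Y)` of morphisms of representations, as a submodule of
`Π i, Hom_K(X(i),Y(i))`. -/
def homS (X Y : QuivRep K V A t h) : Submodule K (∀ i, X.sp i →ₗ[K] Y.sp i) where
  carrier := {φ | ∀ a : A, (φ (h a)).comp (X.map a) = (Y.map a).comp (φ (t a))}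
  zero_mem' := by intro a; simp
  add_mem' := by
    intro f g hf hg a
    simp only [Pi.add_apply, LinearMap.add_comp, LinearMap.comp_add, hf a, hg a]
  smul_mem' := by
    intro c f hf a
    simp only [Pi.smul_apply, LinearMap.smul_comp, LinearMap.comp_smul, hf a]

/-- The dimension of `Hom_Q(X,Y)`. -/
def homDim (X Y : QuivRep K V A t h) : ℕ := Module.finrank K (homS X Y)

/-- The map `d^X_Y` from Ringel's canonical exact sequence. -/
def dmap (X Y : QuivRep K V A t h) :
    (∀ i, X.sp i →ₗ[K] Y.sp i) →ₗ[K] (∀ a : A, X.sp (t a) →ₗ[K] Y.sp (h a)) where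
  toFun φ := fun a => (φ (h a)).comp (X.map a) - (Y.map a).comp (φ (t a))
  map_add' f g := by
    funext a
    simp only [Pi.add_apply, LinearMap.add_comp, LinearMap.comp_add]
    abel
  map_smul' c f := by
    funext a
    simp only [Pi.smul_apply, LinearMap.smul_comp, LinearMap.comp_smul, smul_sub,
      RingHom.id_apply]

/-- The dimension of `Ext^1_Q(X,Y)`, i.e. of the cokernel of `d^X_Y`. -/
def extDim (X Y : QuivRep K V A t h) : ℕ :=
  Module.finrank K ((∀ a : A, X.sp (t a) →ₗ[K] Y.sp (h a)) ⧸ LinearMap.range (dmap X Y))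

/-- A rigid representation: `Ext^1_Q(X,X) = 0`. -/
def IsRigid (X : QuivRep K V A t h) : Prop := extDim X X = 0

/-- A Schur representation: `End_Q(X) = K·id`. -/
def IsSchur (X : QuivRep K V A t h) : Prop := homDim X X = 1

/-- An exceptional representation: rigid and Schur. -/
def IsExceptional (X : QuivRep K V A t h) : Prop := IsRigid X ∧ IsSchur X

end QuivRep

/-- `β` is a real Schur root: the dimension vector of an exceptional representation. -/
def isRealSchurRoot (t h : A → V) (β : V → ℕ) : Prop :=
  ∃ X : QuivRep K V A t h, X.dimVec = β ∧ X.IsExceptional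

/-- `ext_Q(α,β)` : the generic (minimal) value of `dim Ext^1_Q` on pairs of
representations of dimension vectors `α`, `β`. -/
def extMin (t h : A → V) (α β : V → ℕ) : ℕ :=
  sInf {n | ∃ X Y : QuivRep K V A t h, X.dimVec = α ∧ Y.dimVec = β ∧ QuivRep.extDim X Y = n}

/-- `hom_Q(α,β)` : the generic (minimal) value of `dim Hom_Q`. -/
def homMin (t h : A → V) (α β : V → ℕ) : ℕ :=
  sInf {n | ∃ X Y : QuivRep K V A t h, X.dimVec = α ∧ Y.dimVec = β ∧ QuivRep.homDim X Y = n}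

/-- `β' ↪ β` : every representation of dimension vector `β` has a subrepresentation of
dimension vector `β'`. -/
def Embeds (t h : A → V) (β' β : V → ℕ) : Prop :=
  ∀ X : QuivRep K V A t h, X.dimVec = β → ∃ U : QuivRep.Sub X, U.dimVec = β'

/-- `σ`-semi-stability of a representation. -/
def IsSemistable {t h : A → V} (σ : V → ℤ) (X : QuivRep K V A t h) : Prop :=
  (∑ i, σ i * (X.dimVec i : ℤ)) = 0 ∧
  ∀ U : QuivRep.Sub X, (∑ i, σ i * (U.dimVec i : ℤ)) ≤ 0

/-- `σ`-stability of a representation. -/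
def IsStable {t h : A → V} (σ : V → ℤ) (X : QuivRep K V A t h) : Prop :=
  (∑ i, σ i * (X.dimVec i : ℤ)) = 0 ∧ X.dimVec ≠ (fun _ => 0) ∧
  ∀ U : QuivRep.Sub X, U.dimVec ≠ (fun _ => 0) → U.dimVec ≠ X.dimVec →
    (∑ i, σ i * (U.dimVec i : ℤ)) < 0

/-- Isomorphism of representations. -/
def RepIso {t h : A → V} (X Y : QuivRep K V A t h) : Prop :=
  ∃ e : ∀ i, X.sp i ≃ₗ[K] Y.sp i,
    ∀ (a : A) (x : X.sp (t a)), e (h a) (X.map a x) = Y.map a (e (t a) x)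

/-- A quiver exceptional sequence of dimension vectors. -/
def IsQES (t h : A → V) {l : ℕ} (b : Fin l → V → ℕ) : Prop :=
  (∀ j, isRealSchurRoot K t h (b j)) ∧
  ∀ i j : Fin l, i < j →
    homMin K t h (b i) (b j) = 0 ∧ extMin K t h (b i) (b j) = 0 ∧
      eulerForm t h (natZ (b j)) (natZ (b i)) ≤ 0

/-- The cone of nonnegative rational linear combinations of a finite set of integral
vectors. -/
def coneOf (C : Finset (V → ℤ)) : Set (V → ℚ) :=
  {x | ∃ lam : (V → ℤ) → ℚ, (∀ c, 0 ≤ lam c) ∧ x = ∑ c ∈ C, lam c • intQ c}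

/-- A compatible subset of the set `Ψ(Q)_{≥ -1}` of almost positive real Schur roots. -/
def IsCompatible (t h : A → V) (C : Finset (V → ℤ)) : Prop :=
  (∀ x ∈ C, (∃ β : V → ℕ, isRealSchurRoot K t h β ∧ x = natZ β) ∨
      (∃ i : V, x = fun j => -(gammaRoot t h i j : ℤ))) ∧
  (∀ x ∈ C, ∀ y ∈ C, x ≠ y →
    (∀ β₁ β₂ : V → ℕ, isRealSchurRoot K t h β₁ → isRealSchurRoot K t h β₂ →
      x = natZ β₁ → y = natZ β₂ → extMin K t h β₁ β₂ = 0) ∧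
    (∀ (β : V → ℕ) (i : V), isRealSchurRoot K t h β →
      x = natZ β → y = (fun j => -(gammaRoot t h i j : ℤ)) → β i = 0))

/-- The domain of semi-invariants `D(β) ⊆ ℚ^{Q_0}`. -/
def Dom (t h : A → V) (β : V → ℕ) : Set (V → ℚ) :=
  {x | eulerForm t h x (natQ β) = 0 ∧
    ∀ β' : V → ℕ, Embeds K t h β' β → eulerForm t h x (natQ β') ≤ 0}

/-- A quiver exceptional set: a subset of `Ψ(Q)_{≥ -1}` of the form
`{β_1,…,β_l, −γ_{i_{l+1}},…,−γ_{i_m}}` with `β_j(i_k) = 0` and whose real-Schur-root part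
can be ordered into a quiver exceptional sequence. -/
def IsQExcSet (t h : A → V) (E : Finset (V → ℤ)) : Prop :=
  ∃ (l m : ℕ) (b : Fin l → V → ℕ) (g : Fin m → V),
    Function.Injective b ∧ Function.Injective g ∧ IsQES K t h b ∧
    (∀ j k, b j (g k) = 0) ∧
    (E : Set (V → ℤ)) =
      (Set.range fun j => natZ (b j)) ∪
      (Set.range fun k => (fun v => -(gammaRoot t h (g k) v : ℤ)))


/-- The underlying graph of the quiver is connected. -/
def IsConnectedQuiver (t h : A → V) : Prop :=
  ∀ i j : V,
    Relation.ReflTransGen (fun u v => ∃ a, (t a = u ∧ h a = v) ∨ (t a = v ∧ h a = u)) i j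

/-- Morphisms of representations. -/
structure RepHom {K : Type} [Field K] {V A : Type} {t h : A → V}
    (X Y : QuivRep K V A t h) : Type where
  app : ∀ i, X.sp i →ₗ[K] Y.sp i
  comm : ∀ a : A, (app (h a)).comp (X.map a) = (Y.map a).comp (app (t a))

namespace RepHom

variable {K₀ : Type} [Field K₀] {t h : A → V}

/-- The identity morphism. -/
def idHom (X : QuivRep K₀ V A t h) : RepHom X X :=
  ⟨fun _ => LinearMap.id, fun a => by ext x; simp⟩

/-- Composition of morphisms. -/
def comp {X Y Z : QuivRep K₀ V A t h} (f : RepHom X Y) (g : RepHom Y Z) : RepHom X Z :=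
  ⟨fun i => (g.app i).comp (f.app i), fun a => by
    ext x
    have hf := LinearMap.congr_fun (f.comm a) x
    have hg := LinearMap.congr_fun (g.comm a) (f.app (t a) x)
    simp only [LinearMap.comp_apply] at hf hg ⊢
    rw [hf, hg]⟩

/-- Sum of morphisms. -/
def add {X Y : QuivRep K₀ V A t h} (f g : RepHom X Y) : RepHom X Y :=
  ⟨fun i => f.app i + g.app i, fun a => by
    simp only [LinearMap.add_comp, LinearMap.comp_add, f.comm a, g.comm a]⟩

/-- Scalar multiple of a morphism. -/
def smul {X Y : QuivRep K₀ V A t h} (c : K₀) (f : RepHom X Y) : RepHom X Y :=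
  ⟨fun i => c • f.app i, fun a => by
    simp only [LinearMap.smul_comp, LinearMap.comp_smul, f.comm a]⟩

end RepHom

/-- The number of arrows `i → j` in the Ext-quiver `Q(𝓔)` of a sequence of dimension
vectors: `−⟨β_i, β_j⟩` for `i ≠ j`. -/
def extMult (t h : A → V) {l : ℕ} (b : Fin l → V → ℕ) (i j : Fin l) : ℕ :=
  if i = j then 0 else (-(eulerForm t h (natZ (b i)) (natZ (b j)))).toNat

/-- The arrow set of the Ext-quiver `Q(𝓔)`. -/
abbrev ExtArrow (t h : A → V) {l : ℕ} (b : Fin l → V → ℕ) : Type :=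
  (i : Fin l) × (j : Fin l) × Fin (extMult t h b i j)

/-- The representation space `rep(Q,β)` as a product of matrix spaces. -/
abbrev RepSpace (t h : A → V) (β : V → ℕ) : Type :=
  ∀ a : A, Matrix (Fin (β (h a))) (Fin (β (t a))) K

/-- The (base-change) action of `GL(β)` on `rep(Q,β)`. -/
def glAct (t h : A → V) {β : V → ℕ}
    (g : ∀ i, Matrix.GeneralLinearGroup (Fin (β i)) K) (W : RepSpace K t h β) :
    RepSpace K t h β :=
  fun a => (g (h a) : Matrix (Fin (β (h a))) (Fin (β (h a))) K) * W a *
    (((g (t a))⁻¹ : Matrix.GeneralLinearGroup (Fin (β (t a))) K) :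
      Matrix (Fin (β (t a))) (Fin (β (t a))) K)

/-- A polynomial function on `rep(Q,β)`. -/
def IsPolyFun (t h : A → V) {β : V → ℕ} (f : RepSpace K t h β → K) : Prop :=
  ∃ P : MvPolynomial ((a : A) × (Fin (β (h a)) × Fin (β (t a)))) K,
    ∀ W, f W = MvPolynomial.eval (fun x => W x.1 x.2.1 x.2.2) P

/-- The weight space `SI(Q,β)_σ` of semi-invariant polynomial functions of weight `σ`. -/
def SIweight (t h : A → V) (β : V → ℕ) (σ : V → ℤ) :
    Submodule K (RepSpace K t h β → K) where
  carrier := {f | IsPolyFun K t h f ∧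
    ∀ (g : ∀ i, Matrix.GeneralLinearGroup (Fin (β i)) K) (W : RepSpace K t h β),
      f (glAct K t h g W) =
        (((∏ i, (Matrix.GeneralLinearGroup.det (g i)) ^ σ i : Kˣ) : K)) * f W}
  zero_mem' := by
    refine ⟨⟨0, by simp⟩, by simp⟩
  add_mem' := by
    rintro f g ⟨⟨P, hP⟩, hf⟩ ⟨⟨Q, hQ⟩, hg⟩
    refine ⟨⟨P + Q, fun W => ?_⟩, fun gg W => ?_⟩
    · simp [hP W, hQ W]
    · simp only [Pi.add_apply, hf gg W, hg gg W]; ring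
  smul_mem' := by
    rintro c f ⟨⟨P, hP⟩, hf⟩
    refine ⟨⟨MvPolynomial.C c * P, fun W => ?_⟩, fun gg W => ?_⟩
    · simp [hP W]
    · simp only [Pi.smul_apply, hf gg W, smul_eq_mul]; ring

/-- Entry of a matrix accessed through natural-number indices. -/
def entryN {m n : ℕ} (M : Matrix (Fin m) (Fin n) K) (r c : ℕ) : K :=
  if hr : r < m then (if hc : c < n then M ⟨r, hr⟩ ⟨c, hc⟩ else 0) else 0

/-- The matrix of the map `d^V_W` (with `V` of dimension vector `α` varying and `W` of
dimension vector `w` fixed), in the standard bases. -/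
def schofieldMatrix (t h : A → V) {α w : V → ℕ}
    (Vm : RepSpace K t h α) (W : RepSpace K t h w) :
    Matrix ((a : A) × (Fin (w (h a)) × Fin (α (t a)))) ((i : V) × (Fin (w i) × Fin (α i))) K :=
  fun r c =>
    (if c.1 = h r.1 ∧ (c.2.1 : ℕ) = (r.2.1 : ℕ) then
      entryN K (Vm r.1) (c.2.2 : ℕ) (r.2.2 : ℕ) else 0)
    - (if c.1 = t r.1 ∧ (c.2.2 : ℕ) = (r.2.2 : ℕ) then
      entryN K (W r.1) (r.2.1 : ℕ) (c.2.1 : ℕ) else 0)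

/-- The Schofield semi-invariant `c_W : rep(Q,α) → K`, `V ↦ det d^V_W` (defined when
`⟨α, dim W⟩ = 0`, i.e. when `d^V_W` is a square matrix). -/
def schofieldSI (t h : A → V) {α w : V → ℕ} (W : RepSpace K t h w)
    (Vm : RepSpace K t h α) : K :=
  if hc : Fintype.card ((i : V) × (Fin (w i) × Fin (α i))) =
      Fintype.card ((a : A) × (Fin (w (h a)) × Fin (α (t a)))) then
    ((schofieldMatrix K t h Vm W).submatrix (Fintype.equivOfCardEq hc) id).det
  else 0

/-- The representation of `Q` attached to a point of `rep(Q,β)`. -/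
def toRep (t h : A → V) {β : V → ℕ} (W : RepSpace K t h β) : QuivRep K V A t h where
  sp i := Fin (β i) → K
  map a := Matrix.mulVecLin (W a)

/-!
For the weight `σ = ⟨X, ·⟩` of a rigid representation `X`, the Euler form being `hom - ext` and
`Ext¹(X, ·)` being right exact, every quotient `I` of a representation `R` with `Ext¹(X, R) = 0`
satisfies `σ(I) = dim Hom(X, I) ≥ 0`. If `W` is `σ`-stable, it follows that `Hom(X, W)` and
`Ext¹(X, W)` vanish and that every nonzero morphism `R → W` is surjective.

Restricting `W` to a sink of its support gives `P` with `Ext¹(P, W) = 0 ≠ Hom(P, W)`, and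
extending `P` by copies of `X` (Bongartz) gives `R` with the same property and `Ext¹(X, R) = 0`.
Both persist when `R` is replaced by the kernel of a nonzero `R → W`, as long as the kernel still
maps nontrivially to `W`. Dimensions drop, so some kernel `R₁` has `Hom(R₁, W) = 0`, and
the exact sequence `Hom(R₁, W) → Ext¹(W, W) → Ext¹(R, W)` yields `Ext¹(W, W) = 0`.

Schur's lemma gives `End W = K`, and duality with the opposite quiver exchanges the two weights.
-/

section Weights

open scoped Matrix

variable {Q₀ Q₁ : Type} {t h : Q₁ → Q₀}

theorem natZ_add (d e : Q₀ → ℕ) : natZ (d + e) = natZ d + natZ e :=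
  funext fun i => Nat.cast_add (d i) (e i)

theorem weightL_dotProduct [Fintype Q₀] [DecidableEq Q₀] [Fintype Q₁] (α β : Q₀ → ℤ) :
    weightL t h α ⬝ᵥ β = eulerForm t h α β := by
  simp only [dotProduct, weightL, eulerForm, sub_mul, Finset.sum_sub_distrib, Finset.sum_mul]
  rw [Finset.sum_comm (s := Finset.univ (α := Q₀)) (t := Finset.univ (α := Q₁))]
  simp

theorem weightR_eq_neg_weightL [Fintype Q₀] [DecidableEq Q₀] [Fintype Q₁] (α : Q₀ → ℤ) :
    weightR t h α = -weightL h t α := by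
  funext i
  simp only [weightR, weightL, eulerForm, Pi.neg_apply, mul_comm]

end Weights

section Representations

open QuivRep
open scoped Matrix

variable {k : Type} [Field k] {Q₀ Q₁ : Type} {t h : Q₁ → Q₀}
  {L M N P R W X Y : QuivRep k Q₀ Q₁ t h}

section HomExt

theorem QuivRep.ker_dmap (X Y : QuivRep k Q₀ Q₁ t h) :
    LinearMap.ker (dmap X Y) = homS X Y := by
  ext φ
  exact funext_iff.trans (forall_congr' fun _ => sub_eq_zero)

theorem QuivRep.dmap_postcomp (g : RepHom M N) (φ : ∀ i, X.sp i →ₗ[k] M.sp i) :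
    dmap X N (fun i => g.app i ∘ₗ φ i) = fun a => g.app (h a) ∘ₗ dmap X M φ a := by
  funext a
  change (g.app (h a) ∘ₗ φ (h a)) ∘ₗ X.map a - N.map a ∘ₗ g.app (t a) ∘ₗ φ (t a) =
    g.app (h a) ∘ₗ (φ (h a) ∘ₗ X.map a - M.map a ∘ₗ φ (t a))
  rw [LinearMap.comp_sub, ← LinearMap.comp_assoc, ← LinearMap.comp_assoc, ← LinearMap.comp_assoc,
    g.comm]

theorem QuivRep.dmap_precomp (f : RepHom L M) (φ : ∀ i, M.sp i →ₗ[k] Y.sp i) :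
    dmap L Y (fun i => φ i ∘ₗ f.app i) = fun a => dmap M Y φ a ∘ₗ f.app (t a) := by
  funext a
  change (φ (h a) ∘ₗ f.app (h a)) ∘ₗ L.map a - Y.map a ∘ₗ φ (t a) ∘ₗ f.app (t a) =
    (φ (h a) ∘ₗ M.map a - Y.map a ∘ₗ φ (t a)) ∘ₗ f.app (t a)
  rw [LinearMap.sub_comp, LinearMap.comp_assoc, f.comm, LinearMap.comp_assoc,
    LinearMap.comp_assoc]

theorem QuivRep.homDim_eq_zero_iff_dmap [Finite Q₀] :
    homDim X Y = 0 ↔ ∀ φ, dmap X Y φ = 0 → φ = 0 := by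
  rw [homDim, Submodule.finrank_eq_zero, ← ker_dmap, LinearMap.ker_eq_bot']

theorem QuivRep.homDim_eq_zero_iff [Finite Q₀] :
    homDim X Y = 0 ↔ ∀ f : RepHom X Y, f.app = 0 := by
  rw [homDim, Submodule.finrank_eq_zero, Submodule.eq_bot_iff]
  exact ⟨fun H f => H f.app f.comm, fun H φ hφ => H ⟨φ, hφ⟩⟩

theorem QuivRep.extDim_eq_zero_iff [Finite Q₁] :
    extDim X Y = 0 ↔ Function.Surjective (dmap X Y) := by
  rw [extDim, Module.finrank_zero_iff, Submodule.Quotient.subsingleton_iff,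
    LinearMap.range_eq_top]

theorem QuivRep.eulerForm_dimVec [Fintype Q₀] [Fintype Q₁] (X Y : QuivRep k Q₀ Q₁ t h) :
    eulerForm t h (natZ X.dimVec) (natZ Y.dimVec) = (homDim X Y : ℤ) - extDim X Y := by
  have hker := LinearMap.finrank_range_add_finrank_ker (dmap X Y)
  have hcoker := Submodule.finrank_quotient_add_finrank (LinearMap.range (dmap X Y))
  rw [Module.finrank_pi_fintype] at hker hcoker
  simp only [Module.finrank_linearMap] at hker hcoker
  rw [ker_dmap] at hker
  simp only [eulerForm, natZ, dimVec, homDim, extDim, ← Nat.cast_mul, ← Nat.cast_sum]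
  omega

end HomExt

section RangeKer

theorem RepHom.comm_apply (f : RepHom X Y) (a : Q₁) (x : X.sp (t a)) :
    f.app (h a) (X.map a x) = Y.map a (f.app (t a) x) :=
  LinearMap.congr_fun (f.comm a) x

/-- A subrepresentation regarded as a representation in its own right. -/
abbrev QuivRep.Sub.toRep (U : Sub X) : QuivRep k Q₀ Q₁ t h where
  sp i := U.sub i
  map a := (X.map a).restrict (U.le a)

/-- The inclusion of a subrepresentation. -/
def QuivRep.Sub.incl (U : Sub X) : RepHom U.toRep X where
  app i := (U.sub i).subtype
  comm _ := rfl

theorem QuivRep.Sub.incl_injective (U : Sub X) (i : Q₀) : Function.Injective (U.incl.app i) :=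
  Subtype.val_injective

/-- The image of a morphism, as a subrepresentation of the target. -/
def RepHom.range (f : RepHom X Y) : Sub Y where
  sub i := LinearMap.range (f.app i)
  le a := by
    rintro _ ⟨x, rfl⟩
    exact ⟨X.map a x, f.comm_apply a x⟩

/-- The kernel of a morphism, as a subrepresentation of the source. -/
def RepHom.ker (f : RepHom X Y) : Sub X where
  sub i := LinearMap.ker (f.app i)
  le a x hx := by
    rw [LinearMap.mem_ker] at hx ⊢
    rw [f.comm_apply, hx, map_zero]

/-- A morphism with its target restricted to its image. -/
def RepHom.rangeRestrict (f : RepHom X Y) : RepHom X f.range.toRep where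
  app i := (f.app i).rangeRestrict
  comm a := LinearMap.ext fun x => Subtype.ext (f.comm_apply a x)

theorem RepHom.rangeRestrict_surjective (f : RepHom X Y) (i : Q₀) :
    Function.Surjective (f.rangeRestrict.app i) :=
  (f.app i).surjective_rangeRestrict

theorem RepHom.app_eq_zero_of_rangeRestrict {f : RepHom X Y} (hf : f.rangeRestrict.app = 0) :
    f.app = 0 :=
  funext fun i => LinearMap.ext fun x =>
    congrArg Subtype.val (LinearMap.congr_fun (congrFun hf i) x)

theorem RepHom.range_dimVec_add_ker_dimVec (f : RepHom X Y) :
    f.range.dimVec + f.ker.dimVec = X.dimVec :=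
  funext fun i => LinearMap.finrank_range_add_finrank_ker (f.app i)

theorem RepHom.range_dimVec_eq_zero_iff {f : RepHom X Y} : f.range.dimVec = 0 ↔ f.app = 0 := by
  rw [funext_iff, funext_iff]
  exact forall_congr' fun i => Submodule.finrank_eq_zero.trans LinearMap.range_eq_bot

theorem RepHom.surjective_of_range_dimVec_eq {f : RepHom X Y} (hf : f.range.dimVec = Y.dimVec)
    (i : Q₀) : Function.Surjective (f.app i) :=
  LinearMap.range_eq_top.mp (Submodule.eq_top_of_finrank_eq (congrFun hf i))

end RangeKer

section ShortExact

theorem exists_comp_eq_of_injective {E F G : Type} [AddCommGroup E] [Module k E]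
    [AddCommGroup F] [Module k F] [AddCommGroup G] [Module k G] {f : E →ₗ[k] F}
    (hf : Function.Injective f) (u : E →ₗ[k] G) : ∃ v : F →ₗ[k] G, v ∘ₗ f = u := by
  obtain ⟨r, hr⟩ := f.exists_leftInverse_of_injective (LinearMap.ker_eq_bot.mpr hf)
  exact ⟨u ∘ₗ r, by rw [LinearMap.comp_assoc, hr, LinearMap.comp_id]⟩

/-- `0 → L → M → N → 0` is a short exact sequence of representations. -/
structure RepHom.IsShortExact (f : RepHom L M) (g : RepHom M N) : Prop where
  injective : ∀ i, Function.Injective (f.app i)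
  exact : ∀ i, Function.Exact (f.app i) (g.app i)
  surjective : ∀ i, Function.Surjective (g.app i)

theorem RepHom.isShortExact_ker_incl {g : RepHom M N} (hg : ∀ i, Function.Surjective (g.app i)) :
    IsShortExact g.ker.incl g where
  injective := g.ker.incl_injective
  exact i := LinearMap.exact_subtype_ker_map (g.app i)
  surjective := hg

theorem RepHom.IsShortExact.exists_lift {f : RepHom L M} {g : RepHom M N}
    (H : IsShortExact f g) (i : Q₀) {E : Type} [AddCommGroup E] [Module k E]
    (φ : E →ₗ[k] M.sp i) (hφ : g.app i ∘ₗ φ = 0) : ∃ ψ : E →ₗ[k] L.sp i, f.app i ∘ₗ ψ = φ :=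
  ⟨_, LinearMap.codRestrictOfInjective_comp φ _ (H.injective i) fun x =>
    (H.exact i (φ x)).mp (LinearMap.congr_fun hφ x)⟩

theorem RepHom.IsShortExact.exists_desc {f : RepHom L M} {g : RepHom M N}
    (H : IsShortExact f g) (i : Q₀) {E : Type} [AddCommGroup E] [Module k E]
    (φ : M.sp i →ₗ[k] E) (hφ : φ ∘ₗ f.app i = 0) : ∃ ψ : N.sp i →ₗ[k] E, ψ ∘ₗ g.app i = φ :=
  (LinearMap.exact_lcomp_of_exact_of_surjective E (H.exact i) (H.surjective i) φ).mp hφ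

theorem QuivRep.extDim_eq_zero_of_surjective [Finite Q₁] (hM : extDim X M = 0) {g : RepHom M N}
    (hg : ∀ i, Function.Surjective (g.app i)) : extDim X N = 0 := by
  rw [extDim_eq_zero_iff] at hM ⊢
  intro ξ
  choose ζ hζ using fun a => Module.projective_lifting_property (g.app (h a)) (ξ a) (hg (h a))
  obtain ⟨φ, hφ⟩ := hM ζ
  exact ⟨fun i => g.app i ∘ₗ φ i, by rw [dmap_postcomp, hφ]; exact funext hζ⟩

theorem QuivRep.extDim_eq_zero_of_injective [Finite Q₁] (hM : extDim M Y = 0) {f : RepHom L M}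
    (hf : ∀ i, Function.Injective (f.app i)) : extDim L Y = 0 := by
  rw [extDim_eq_zero_iff] at hM ⊢
  intro ξ
  choose ζ hζ using fun a => exists_comp_eq_of_injective (hf (t a)) (ξ a)
  obtain ⟨φ, hφ⟩ := hM ζ
  exact ⟨fun i => φ i ∘ₗ f.app i, by rw [dmap_precomp, hφ]; exact funext hζ⟩

theorem RepHom.IsShortExact.extDim_left_eq_zero [Finite Q₀] [Finite Q₁] {f : RepHom L M}
    {g : RepHom M N} (H : IsShortExact f g) (hM : extDim X M = 0) (hN : homDim X N = 0) :
    extDim X L = 0 := by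
  rw [extDim_eq_zero_iff] at hM ⊢
  rw [homDim_eq_zero_iff_dmap] at hN
  intro ξ
  obtain ⟨φ, hφ⟩ := hM fun a => f.app (h a) ∘ₗ ξ a
  have hgφ : (fun i => g.app i ∘ₗ φ i) = 0 := by
    refine hN _ ?_
    rw [dmap_postcomp, hφ]
    funext a
    rw [← LinearMap.comp_assoc, (H.exact (h a)).linearMap_comp_eq_zero, LinearMap.zero_comp]
    rfl
  choose ψ hψ using fun i => H.exists_lift i (φ i) (congrFun hgφ i)
  obtain rfl : (fun i => f.app i ∘ₗ ψ i) = φ := funext hψ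
  rw [dmap_postcomp] at hφ
  exact ⟨ψ, funext fun a => LinearMap.cancel_left (H.injective (h a)) |>.mp (congrFun hφ a)⟩

theorem RepHom.IsShortExact.extDim_right_eq_zero [Finite Q₀] [Finite Q₁] {f : RepHom L M}
    {g : RepHom M N} (H : IsShortExact f g) (hM : extDim M Y = 0) (hL : homDim L Y = 0) :
    extDim N Y = 0 := by
  rw [extDim_eq_zero_iff] at hM ⊢
  rw [homDim_eq_zero_iff_dmap] at hL
  intro ξ
  obtain ⟨φ, hφ⟩ := hM fun a => ξ a ∘ₗ g.app (t a)
  have hφf : (fun i => φ i ∘ₗ f.app i) = 0 := by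
    refine hL _ ?_
    rw [dmap_precomp, hφ]
    funext a
    rw [LinearMap.comp_assoc, (H.exact (t a)).linearMap_comp_eq_zero, LinearMap.comp_zero]
    rfl
  choose ψ hψ using fun i => H.exists_desc i (φ i) (congrFun hφf i)
  obtain rfl : (fun i => ψ i ∘ₗ g.app i) = φ := funext hψ
  rw [dmap_precomp] at hφ
  exact ⟨ψ, funext fun a => LinearMap.cancel_right (H.surjective (t a)) |>.mp (congrFun hφ a)⟩

theorem RepHom.IsShortExact.exists_dmap_eq_extending [Finite Q₁] {f : RepHom L M}
    {g : RepHom M N} (H : IsShortExact f g) (hN : extDim N Y = 0)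
    {φ : ∀ i, L.sp i →ₗ[k] Y.sp i} {ξ : ∀ a, M.sp (t a) →ₗ[k] Y.sp (h a)}
    (hφ : dmap L Y φ = fun a => ξ a ∘ₗ f.app (t a)) :
    ∃ χ, dmap M Y χ = ξ ∧ ∀ i, χ i ∘ₗ f.app i = φ i := by
  choose θ hθ using fun i => exists_comp_eq_of_injective (H.injective i) (φ i)
  have hdesc (a : Q₁) : (ξ a - dmap M Y θ a) ∘ₗ f.app (t a) = 0 := by
    rw [LinearMap.sub_comp, sub_eq_zero, ← congrFun (dmap_precomp f θ) a, funext hθ, hφ]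
  choose η hη using fun a => H.exists_desc (t a) _ (hdesc a)
  obtain ⟨ψ, hψ⟩ := extDim_eq_zero_iff.mp hN η
  refine ⟨θ + fun i => ψ i ∘ₗ g.app i, ?_, fun i => ?_⟩
  · rw [map_add, dmap_precomp, hψ, funext hη]
    exact add_sub_cancel _ _
  · rw [Pi.add_apply, LinearMap.add_comp, hθ, LinearMap.comp_assoc,
      (H.exact i).linearMap_comp_eq_zero, LinearMap.comp_zero, add_zero]

theorem RepHom.IsShortExact.extDim_middle_eq_zero [Finite Q₁] {f : RepHom L M}
    {g : RepHom M N} (H : IsShortExact f g) (hL : extDim L Y = 0) (hN : extDim N Y = 0) :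
    extDim M Y = 0 := by
  rw [extDim_eq_zero_iff]
  intro ξ
  obtain ⟨φ, hφ⟩ := extDim_eq_zero_iff.mp hL fun a => ξ a ∘ₗ f.app (t a)
  obtain ⟨χ, hχ, -⟩ := H.exists_dmap_eq_extending hN hφ
  exact ⟨χ, hχ⟩

theorem RepHom.IsShortExact.homDim_left_eq_zero [Finite Q₀] [Finite Q₁] {f : RepHom L M}
    {g : RepHom M N} (H : IsShortExact f g) (hM : homDim M Y = 0) (hN : extDim N Y = 0) :
    homDim L Y = 0 := by
  rw [homDim_eq_zero_iff_dmap] at hM ⊢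
  intro φ hφ
  obtain ⟨χ, hχ, hχf⟩ := H.exists_dmap_eq_extending (ξ := 0) hN
    (hφ.trans (funext fun a => (LinearMap.zero_comp _).symm))
  funext i
  rw [← hχf i, hM χ hχ, Pi.zero_apply, LinearMap.zero_comp, Pi.zero_apply]

end ShortExact

section Bongartz

/-- The space `Ext¹(X, Y)`, whose dimension is `extDim X Y`. -/
abbrev QuivRep.Ext (X Y : QuivRep k Q₀ Q₁ t h) : Type :=
  (∀ a, X.sp (t a) →ₗ[k] Y.sp (h a)) ⧸ LinearMap.range (dmap X Y)

/-- The map `Ext¹(X, M) → Ext¹(X, N)` induced by a morphism `g : M → N`. -/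
def QuivRep.extMap (X : QuivRep k Q₀ Q₁ t h) (g : RepHom M N) : Ext X M →ₗ[k] Ext X N :=
  Submodule.mapQ _ _ (LinearMap.piMap fun a => (g.app (h a)).compRight k) <| by
    rintro _ ⟨φ, rfl⟩
    exact ⟨fun i => g.app i ∘ₗ φ i, dmap_postcomp g φ⟩

theorem RepHom.IsShortExact.extMap_surjective [Finite Q₁] {f : RepHom L M} {g : RepHom M N}
    (H : IsShortExact f g) (hN : extDim X N = 0) : Function.Surjective (extMap X f) := by
  intro e
  obtain ⟨η, rfl⟩ := Submodule.Quotient.mk_surjective _ e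
  obtain ⟨φ, hφ⟩ := extDim_eq_zero_iff.mp hN fun a => g.app (h a) ∘ₗ η a
  choose χ hχ using fun i => Module.projective_lifting_property (g.app i) (φ i) (H.surjective i)
  have hlift (a : Q₁) : g.app (h a) ∘ₗ (η a - dmap X M χ a) = 0 := by
    rw [LinearMap.comp_sub, ← congrFun (dmap_postcomp g χ) a, funext hχ, hφ, sub_self]
  choose ζ hζ using fun a => H.exists_lift (h a) _ (hlift a)
  refine ⟨Submodule.Quotient.mk ζ, (Submodule.Quotient.eq _).mpr ⟨-χ, ?_⟩⟩
  rw [map_neg]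
  funext a
  change -dmap X M χ a = f.app (h a) ∘ₗ ζ a - η a
  rw [hζ, sub_sub_cancel_left]

/-- The extension of `X` by `L` with cocycle `ξ`. -/
abbrev QuivRep.extension (ξ : ∀ a, X.sp (t a) →ₗ[k] L.sp (h a)) : QuivRep k Q₀ Q₁ t h where
  sp i := L.sp i × X.sp i
  map a := ((L.map a).coprod (ξ a)).prod (X.map a ∘ₗ LinearMap.snd k _ _)

/-- The inclusion of `L` into an extension of `X` by `L`. -/
def QuivRep.extensionInl (ξ : ∀ a, X.sp (t a) →ₗ[k] L.sp (h a)) : RepHom L (extension ξ) where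
  app i := LinearMap.inl k (L.sp i) (X.sp i)
  comm a := LinearMap.ext fun x => Prod.ext (by simp) (by simp)

/-- The projection of an extension of `X` by `L` onto `X`. -/
def QuivRep.extensionSnd (ξ : ∀ a, X.sp (t a) →ₗ[k] L.sp (h a)) : RepHom (extension ξ) X where
  app i := LinearMap.snd k (L.sp i) (X.sp i)
  comm _ := rfl

theorem QuivRep.extension_isShortExact (ξ : ∀ a, X.sp (t a) →ₗ[k] L.sp (h a)) :
    RepHom.IsShortExact (extensionInl ξ) (extensionSnd ξ) where
  injective _ := LinearMap.inl_injective
  exact _ := Function.Exact.inl_snd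
  surjective _ := LinearMap.snd_surjective

theorem QuivRep.extMap_extensionInl_mk (ξ : ∀ a, X.sp (t a) →ₗ[k] L.sp (h a)) :
    extMap X (extensionInl ξ) (Submodule.Quotient.mk ξ) = 0 := by
  refine (Submodule.Quotient.mk_eq_zero _).mpr ⟨fun i => -LinearMap.inr k (L.sp i) (X.sp i), ?_⟩
  funext a
  refine LinearMap.ext fun x => ?_
  simp [dmap, extension, extensionInl]

theorem QuivRep.IsRigid.extDim_extension_lt [Finite Q₁] (hX : X.IsRigid)
    {ξ : ∀ a, X.sp (t a) →ₗ[k] L.sp (h a)} (hξ : ξ ∉ LinearMap.range (dmap X L)) :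
    extDim X (extension ξ) < extDim X L := by
  have hsurj := (extension_isShortExact ξ).extMap_surjective hX
  refine (LinearMap.finrank_le_finrank_of_surjective hsurj).lt_of_ne fun heq => hξ ?_
  have hinj := (LinearMap.injective_iff_surjective_of_finrank_eq_finrank heq.symm).mpr hsurj
  exact (Submodule.Quotient.mk_eq_zero _).mp
    (hinj ((extMap_extensionInl_mk ξ).trans (map_zero _).symm))

-- Each nonsplit extension of `X` by `P` lowers `dim Ext¹(X, P)`, so finitely many of them suffice.
theorem QuivRep.IsRigid.exists_bongartz [Finite Q₀] [Finite Q₁] (hX : X.IsRigid)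
    (P : QuivRep k Q₀ Q₁ t h) :
    ∃ E : QuivRep k Q₀ Q₁ t h, extDim X E = 0 ∧ ∀ Y : QuivRep k Q₀ Q₁ t h, extDim X Y = 0 →
      (extDim P Y = 0 → extDim E Y = 0) ∧ (homDim E Y = 0 → homDim P Y = 0) := by
  induction hn : extDim X P using Nat.strong_induction_on generalizing P with
  | _ n ih =>
    by_cases hP : extDim X P = 0
    · exact ⟨P, hP, fun _ _ => ⟨id, id⟩⟩
    obtain ⟨ξ, hξ⟩ : ∃ ξ, ξ ∉ LinearMap.range (dmap X P) := by
      simpa [Function.Surjective] using mt extDim_eq_zero_iff.mpr hP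
    obtain ⟨E, hXE, hE⟩ := ih _ (hn ▸ hX.extDim_extension_lt hξ) (extension ξ) rfl
    refine ⟨E, hXE, fun Y hXY => ⟨fun hPY => (hE Y hXY).1 ?_, fun hEY => ?_⟩⟩
    · exact (extension_isShortExact ξ).extDim_middle_eq_zero hPY hXY
    · exact (extension_isShortExact ξ).homDim_left_eq_zero ((hE Y hXY).2 hEY) hXY

end Bongartz

section Stability

theorem IsStable.isSemistable [Fintype Q₀] {σ : Q₀ → ℤ} (hW : IsStable k σ W) :
    IsSemistable k σ W := by
  refine ⟨hW.1, fun U => ?_⟩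
  by_cases h0 : U.dimVec = 0
  · simp [h0]
  by_cases hU : U.dimVec = W.dimVec
  · exact (hU ▸ hW.1).le
  · exact (hW.2.2 U h0 hU).le

theorem IsSemistable.range_nonneg [Fintype Q₀] {σ : Q₀ → ℤ} (hW : IsSemistable k σ W)
    (f : RepHom W Y) : 0 ≤ σ ⬝ᵥ natZ f.range.dimVec := by
  have hsum : σ ⬝ᵥ natZ f.range.dimVec + σ ⬝ᵥ natZ f.ker.dimVec = 0 := by
    rw [← dotProduct_add, ← natZ_add, f.range_dimVec_add_ker_dimVec]
    exact hW.1
  have hker : σ ⬝ᵥ natZ f.ker.dimVec ≤ 0 := hW.2 f.ker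
  omega

theorem IsStable.surjective [Fintype Q₀] {σ : Q₀ → ℤ} (hW : IsStable k σ W) {f : RepHom R W}
    (hf : f.app ≠ 0) (hσ : 0 ≤ σ ⬝ᵥ natZ f.range.dimVec) (i : Q₀) :
    Function.Surjective (f.app i) := by
  refine RepHom.surjective_of_range_dimVec_eq (not_not.mp fun hne => ?_) i
  exact hσ.not_gt (hW.2.2 f.range (mt RepHom.range_dimVec_eq_zero_iff.mp hf) hne)

theorem IsStable.injective_of_ne_zero [Fintype Q₀] {σ : Q₀ → ℤ} (hW : IsStable k σ W)
    {f : RepHom W W} (hf : f.app ≠ 0) (i : Q₀) : Function.Injective (f.app i) :=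
  LinearMap.injective_iff_surjective.mpr
    (hW.surjective hf (hW.isSemistable.range_nonneg f) i)

theorem IsStable.exists_nontrivial [Fintype Q₀] {σ : Q₀ → ℤ} (hW : IsStable k σ W) :
    ∃ i, Nontrivial (W.sp i) := by
  obtain ⟨i, hi⟩ := Function.ne_iff.mp hW.2.1
  exact ⟨i, Module.nontrivial_of_finrank_pos (Nat.pos_of_ne_zero hi)⟩

theorem IsStable.isSchur [IsAlgClosed k] [Fintype Q₀] {σ : Q₀ → ℤ} (hW : IsStable k σ W) :
    W.IsSchur := by
  obtain ⟨i, hi⟩ := hW.exists_nontrivial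
  let one : homS W W := ⟨(RepHom.idHom W).app, (RepHom.idHom W).comm⟩
  have hone : one ≠ 0 := fun h0 =>
    one_ne_zero (α := Module.End k (W.sp i)) (congrFun (congrArg Subtype.val h0) i)
  refine finrank_eq_one_iff'.mpr ⟨one, hone, fun f => ?_⟩
  obtain ⟨c, hc⟩ := Module.End.exists_eigenvalue (f.1 i)
  obtain ⟨v, hv⟩ := hc.exists_hasEigenvector
  refine ⟨c, not_not.mp fun hne => hv.2 ?_⟩
  let g : RepHom W W := ⟨(f - c • one).1, (f - c • one).2⟩
  have hg : g.app ≠ 0 := fun h0 => hne (sub_eq_zero.mp (Subtype.ext h0)).symm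
  refine hW.injective_of_ne_zero hg i (Eq.trans ?_ (map_zero _).symm)
  change f.1 i v - c • v = 0
  rw [hv.apply_eq_smul, sub_self]

end Stability

section Sinks

theorem exists_isPathFrom_of_transGen {i j : Q₀}
    (H : Relation.TransGen (fun i j => ∃ a, t a = i ∧ h a = j) i j) :
    ∃ p ≠ [], IsPathFrom t h i p j := by
  induction H using Relation.TransGen.head_induction_on with
  | single hij =>
    obtain ⟨a, ha, rfl⟩ := hij
    exact ⟨[a], List.cons_ne_nil _ _, ha, rfl⟩
  | head hij _ ih =>
    obtain ⟨a, ha, rfl⟩ := hij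
    obtain ⟨p, -, hp⟩ := ih
    exact ⟨a :: p, List.cons_ne_nil _ _, ha, hp⟩

theorem Acyclic.exists_sink [Finite Q₀] (hQ : Acyclic t h) {S : Set Q₀} (hS : S.Nonempty) :
    ∃ i ∈ S, ∀ a, t a = i → h a ∉ S := by
  let reachableFrom (j i : Q₀) : Prop :=
    Relation.TransGen (fun i j => ∃ a, t a = i ∧ h a = j) i j
  have : IsTrans Q₀ reachableFrom := ⟨fun _ _ _ hab hbc => hbc.trans hab⟩
  have : Std.Irrefl reachableFrom := ⟨fun i hi => by
    obtain ⟨p, hp, hip⟩ := exists_isPathFrom_of_transGen hi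
    exact hp (hQ i p hip)⟩
  obtain ⟨i, hi, hmin⟩ :=
    (Finite.wellFounded_of_trans_of_irrefl reachableFrom).has_min S hS
  exact ⟨i, hi, fun a ha hS => hmin _ hS (.single ⟨a, ha, rfl⟩)⟩

/-- The subrepresentation `W(i)` concentrated at a vertex `i` all of whose out-neighbours lie
outside the support of `W`. -/
def QuivRep.Sub.atSink [DecidableEq Q₀] (W : QuivRep k Q₀ Q₁ t h) (i : Q₀)
    (hi : ∀ a, t a = i → Subsingleton (W.sp (h a))) : Sub W where
  sub j := if j = i then ⊤ else ⊥
  le a x hx := by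
    by_cases ha : t a = i
    · have := hi a ha
      rw [Subsingleton.elim (W.map a x) 0]
      exact zero_mem _
    · rw [if_neg ha, Submodule.mem_bot] at hx
      rw [hx, map_zero]
      exact zero_mem _

theorem QuivRep.Sub.atSink_extDim_eq_zero [DecidableEq Q₀] [Finite Q₁] {i : Q₀}
    (hi : ∀ a, t a = i → Subsingleton (W.sp (h a))) : extDim (atSink W i hi).toRep W = 0 := by
  have hzero (a : Q₁) : Subsingleton ((atSink W i hi).toRep.sp (t a) →ₗ[k] W.sp (h a)) := by
    by_cases ha : t a = i
    · have := hi a ha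
      infer_instance
    · have : Subsingleton ((atSink W i hi).toRep.sp (t a)) :=
        Submodule.subsingleton_iff_eq_bot.mpr (if_neg ha)
      infer_instance
  exact extDim_eq_zero_iff.mpr (Function.surjective_to_subsingleton _)

theorem QuivRep.Sub.atSink_homDim_ne_zero [DecidableEq Q₀] [Finite Q₀] {i : Q₀}
    [Nontrivial (W.sp i)] (hi : ∀ a, t a = i → Subsingleton (W.sp (h a))) :
    homDim (atSink W i hi).toRep W ≠ 0 := by
  intro H
  obtain ⟨w, hw⟩ := exists_ne (0 : W.sp i)
  have hmem : w ∈ (atSink W i hi).sub i := by simp [atSink]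
  exact hw (LinearMap.congr_fun (congrFun (homDim_eq_zero_iff.mp H (incl _)) i) ⟨w, hmem⟩)

theorem Acyclic.exists_extDim_eq_zero_homDim_ne_zero [Finite Q₀] [Finite Q₁] (hQ : Acyclic t h)
    (hW : ∃ i, Nontrivial (W.sp i)) :
    ∃ P : QuivRep k Q₀ Q₁ t h, extDim P W = 0 ∧ homDim P W ≠ 0 := by
  classical
  obtain ⟨i, hi, hsink⟩ := hQ.exists_sink (S := {i | Nontrivial (W.sp i)}) hW
  have hout (a : Q₁) (ha : t a = i) : Subsingleton (W.sp (h a)) :=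
    not_nontrivial_iff_subsingleton.mp (hsink a ha)
  have : Nontrivial (W.sp i) := hi
  exact ⟨(Sub.atSink W i hout).toRep, Sub.atSink_extDim_eq_zero hout,
    Sub.atSink_homDim_ne_zero hout⟩

end Sinks

section Rigidity

theorem QuivRep.weightL_dotProduct_dimVec [Fintype Q₀] [DecidableEq Q₀] [Fintype Q₁]
    (X Y : QuivRep k Q₀ Q₁ t h) :
    weightL t h (natZ X.dimVec) ⬝ᵥ natZ Y.dimVec = (homDim X Y : ℤ) - extDim X Y :=
  (weightL_dotProduct _ _).trans (eulerForm_dimVec X Y)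

theorem IsSemistable.homDim_eq_zero [Fintype Q₀] [DecidableEq Q₀] [Fintype Q₁]
    (hW : IsSemistable k (weightL t h (natZ X.dimVec)) W) (hX : X.IsRigid) : homDim X W = 0 := by
  refine homDim_eq_zero_iff.mpr fun f => RepHom.app_eq_zero_of_rangeRestrict ?_
  refine homDim_eq_zero_iff.mp ?_ f.rangeRestrict
  have hext : extDim X f.range.toRep = 0 :=
    extDim_eq_zero_of_surjective hX f.rangeRestrict_surjective
  have hle : weightL t h (natZ X.dimVec) ⬝ᵥ natZ f.range.toRep.dimVec ≤ 0 := hW.2 f.range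
  rw [weightL_dotProduct_dimVec, hext] at hle
  omega

theorem IsSemistable.extDim_eq_zero [Fintype Q₀] [DecidableEq Q₀] [Fintype Q₁]
    (hW : IsSemistable k (weightL t h (natZ X.dimVec)) W) (hX : X.IsRigid) : extDim X W = 0 := by
  have hzero : weightL t h (natZ X.dimVec) ⬝ᵥ natZ W.dimVec = 0 := hW.1
  rw [weightL_dotProduct_dimVec, hW.homDim_eq_zero hX] at hzero
  omega

theorem IsStable.surjective_of_extDim_eq_zero [Fintype Q₀] [DecidableEq Q₀] [Fintype Q₁]
    (hW : IsStable k (weightL t h (natZ X.dimVec)) W) (hXR : extDim X R = 0) {f : RepHom R W}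
    (hf : f.app ≠ 0) (i : Q₀) : Function.Surjective (f.app i) := by
  refine hW.surjective hf ?_ i
  have hext : extDim X f.range.toRep = 0 :=
    extDim_eq_zero_of_surjective hXR f.rangeRestrict_surjective
  calc (0 : ℤ) ≤ homDim X f.range.toRep - extDim X f.range.toRep := by simp [hext]
    _ = _ := (weightL_dotProduct_dimVec X f.range.toRep).symm

theorem RepHom.ker_dimVec_lt {f : RepHom X Y} (hf : f.app ≠ 0) : f.ker.dimVec < X.dimVec := by
  rw [← f.range_dimVec_add_ker_dimVec]
  exact lt_add_of_pos_left _ (pos_iff_ne_zero.mpr (mt range_dimVec_eq_zero_iff.mp hf))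

theorem IsStable.isRigid_of_homDim_ne_zero [Fintype Q₀] [DecidableEq Q₀] [Fintype Q₁]
    (hW : IsStable k (weightL t h (natZ X.dimVec)) W) (hXW : homDim X W = 0)
    (hXR : extDim X R = 0) (hRW : extDim R W = 0) (hne : homDim R W ≠ 0) : W.IsRigid := by
  induction hd : R.dimVec using WellFoundedLT.induction generalizing R with
  | _ d ih =>
    obtain ⟨f, hf⟩ := not_forall.mp (mt homDim_eq_zero_iff.mpr hne)
    have hses := RepHom.isShortExact_ker_incl (hW.surjective_of_extDim_eq_zero hXR hf)
    by_cases hker : homDim f.ker.toRep W = 0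
    · exact hses.extDim_right_eq_zero hRW hker
    · exact ih _ (hd ▸ RepHom.ker_dimVec_lt hf) (hses.extDim_left_eq_zero hXR hXW)
        (extDim_eq_zero_of_injective hRW hses.injective) hker rfl

theorem IsStable.isRigid [Fintype Q₀] [DecidableEq Q₀] [Fintype Q₁]
    (hW : IsStable k (weightL t h (natZ X.dimVec)) W) (hQ : Acyclic t h) (hX : X.IsRigid) :
    W.IsRigid := by
  have hXW : extDim X W = 0 := hW.isSemistable.extDim_eq_zero hX
  obtain ⟨P, hPW, hP⟩ := hQ.exists_extDim_eq_zero_homDim_ne_zero hW.exists_nontrivial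
  obtain ⟨E, hXE, hE⟩ := hX.exists_bongartz P
  exact hW.isRigid_of_homDim_ne_zero (hW.isSemistable.homDim_eq_zero hX) hXE
    ((hE W hXW).1 hPW) (mt (hE W hXW).2 hP)

end Rigidity

section Duality

theorem IsPathFrom.append {i j l : Q₀} {p q : List Q₁} (hp : IsPathFrom t h i p j)
    (hq : IsPathFrom t h j q l) : IsPathFrom t h i (p ++ q) l := by
  induction p generalizing i with
  | nil => exact Eq.symm hp ▸ hq
  | cons a p ih => exact ⟨hp.1, ih hp.2⟩

theorem IsPathFrom.reverse {i j : Q₀} {p : List Q₁} (hp : IsPathFrom t h i p j) :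
    IsPathFrom h t j p.reverse i := by
  induction p generalizing i with
  | nil => exact Eq.symm hp
  | cons a p ih =>
    rw [List.reverse_cons]
    exact (ih hp.2).append ⟨rfl, hp.1⟩

theorem Acyclic.op (hQ : Acyclic t h) : Acyclic h t :=
  fun i _ hp => List.reverse_eq_nil_iff.mp (hQ i _ hp.reverse)

/-- The dual representation, of the opposite quiver. -/
abbrev QuivRep.dual (X : QuivRep k Q₀ Q₁ t h) : QuivRep k Q₀ Q₁ h t where
  sp i := Module.Dual k (X.sp i)
  map a := (X.map a).dualMap

theorem QuivRep.dual_dimVec (X : QuivRep k Q₀ Q₁ t h) : X.dual.dimVec = X.dimVec :=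
  funext fun _ => Subspace.dual_finrank_eq

/-- Transposition `f ↦ f.dualMap` as a linear isomorphism, for finite-dimensional target. -/
def dualMapEquiv (E F : Type) [AddCommGroup E] [Module k E] [AddCommGroup F] [Module k F]
    [FiniteDimensional k F] : (E →ₗ[k] F) ≃ₗ[k] (Module.Dual k F →ₗ[k] Module.Dual k E) :=
  (Module.evalEquiv k F).congrRight ≪≫ₗ LinearMap.lflip

theorem QuivRep.dmap_dual (φ : ∀ i, X.sp i →ₗ[k] Y.sp i) :
    dmap Y.dual X.dual (fun i => (φ i).dualMap) = fun a => -(dmap X Y φ a).dualMap := by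
  funext a
  refine LinearMap.ext fun ν => LinearMap.ext fun x => ?_
  change ν (Y.map a (φ (t a) x)) - ν (φ (h a) (X.map a x)) =
    -ν (φ (h a) (X.map a x) - Y.map a (φ (t a) x))
  rw [map_sub, neg_sub]

theorem QuivRep.extDim_dual (X Y : QuivRep k Q₀ Q₁ t h) : extDim Y.dual X.dual = extDim X Y := by
  let e₀ := LinearEquiv.piCongrRight fun i => dualMapEquiv (k := k) (X.sp i) (Y.sp i)
  let e₁ := LinearEquiv.piCongrRight fun a => dualMapEquiv (k := k) (X.sp (t a)) (Y.sp (h a))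
  have hcomm : e₁.toLinearMap ∘ₗ dmap X Y = -(dmap Y.dual X.dual ∘ₗ e₀.toLinearMap) :=
    LinearMap.ext fun φ => (neg_eq_iff_eq_neg.mpr (dmap_dual φ)).symm
  have hrange : (LinearMap.range (dmap X Y)).map e₁.toLinearMap =
      LinearMap.range (dmap Y.dual X.dual) := by
    rw [← LinearMap.range_comp, hcomm]
    exact (LinearMap.range_neg _).trans (e₀.range_comp (dmap Y.dual X.dual))
  exact (Submodule.Quotient.equiv _ _ e₁ hrange).finrank_eq.symm

/-- The subrepresentation of `W` annihilated by a subrepresentation of its dual. -/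
def QuivRep.Sub.coannihilator (U : Sub W.dual) : Sub W where
  sub i := Submodule.dualCoannihilator (U.sub i)
  le a x hx := by
    rw [Submodule.mem_dualCoannihilator] at hx ⊢
    exact fun ν hν => hx _ (U.le a ν hν)

theorem QuivRep.Sub.dimVec_add_coannihilator_dimVec (U : Sub W.dual) :
    U.dimVec + U.coannihilator.dimVec = W.dimVec :=
  funext fun i => Subspace.finrank_add_finrank_dualCoannihilator_eq (U.sub i)

theorem IsStable.dual [Fintype Q₀] {σ : Q₀ → ℤ} (hW : IsStable k σ W) :
    IsStable k (-σ) W.dual := by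
  obtain ⟨hzero, hne, hlt⟩ := hW
  change σ ⬝ᵥ natZ W.dimVec = 0 at hzero
  change -σ ⬝ᵥ natZ W.dual.dimVec = 0 ∧ _
  rw [W.dual_dimVec, neg_dotProduct, hzero]
  refine ⟨neg_zero, hne, fun U hU0 hUW => ?_⟩
  change -σ ⬝ᵥ natZ U.dimVec < 0
  have hU := U.dimVec_add_coannihilator_dimVec
  have hC : σ ⬝ᵥ natZ U.coannihilator.dimVec < 0 :=
    hlt _ (fun hC => hUW (by rwa [hC, ← Pi.zero_def, add_zero] at hU))
      (fun hC => hU0 (add_eq_right.mp (hC ▸ hU)))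
  rw [← hU, natZ_add, dotProduct_add] at hzero
  rw [neg_dotProduct]
  omega

end Duality

end Representations

theorem stmt2_general {k Q₀ Q₁ : Type} [Field k] [IsAlgClosed k] [Fintype Q₀] [DecidableEq Q₀]
    [Fintype Q₁] {t h : Q₁ → Q₀} (hQ : Acyclic t h) {X W : QuivRep k Q₀ Q₁ t h}
    (hX : X.IsRigid) {σ : Q₀ → ℤ}
    (hσ : σ = weightL t h (natZ X.dimVec) ∨ σ = weightR t h (natZ X.dimVec))
    (hW : IsStable k σ W) : W.IsExceptional := by
  refine ⟨?_, hW.isSchur⟩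
  rcases hσ with rfl | rfl
  · exact hW.isRigid hQ hX
  · have hWdual := hW.dual
    rw [weightR_eq_neg_weightL, neg_neg, ← X.dual_dimVec] at hWdual
    exact (W.extDim_dual W).symm.trans
      (hWdual.isRigid hQ.op ((X.extDim_dual X).trans hX))

/-- If `α` is pre-homogeneous and `σ = ⟨α,·⟩` or `σ = −⟨·,α⟩`, then any
dimension vector admitting a `σ`-stable representation is a real Schur root. -/
theorem stmt2 [IsAlgClosed K] [CharZero K] (t h : A → V) (hQ : Acyclic t h)
    (α : V → ℕ) (hpre : ∃ X : QuivRep K V A t h, X.dimVec = α ∧ X.IsRigid)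
    (σ : V → ℤ) (hσ : σ = weightL t h (natZ α) ∨ σ = weightR t h (natZ α))
    (δ : V → ℕ) (hδ : ∃ X : QuivRep K V A t h, X.dimVec = δ ∧ IsStable K σ X) :
    isRealSchurRoot K t h δ := by
  obtain ⟨X, rfl, hX⟩ := hpre
  obtain ⟨W, rfl, hW⟩ := hδ
  exact ⟨W, rfl, stmt2_general hQ hX hσ hW⟩

end
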